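/- Let Δ > 0, K ≥ 1, and let G be a finite set of real n₁×n₂ matrices such that ‖X - Y‖_max ≤ (K-1)Δ for all X, Y ∈ G. Let (i₁,j₁),…,(i_{m'},j_{m'}) be i.i.d. indices uniformly distributed on [n₁]×[n₂] and τ₁,…,τ_{m'} be i.i.d. uniform on [-Δ/2, Δ/2], independent of the indices. Then for every ε > 0, P( ∃ X, Y ∈ G : | (1/m') Σ_{k=1}^{m'} |Q_Δ(X_{i_k,j_k} + τ_k) - Q_Δ(Y_{i_k,j_k} + τ_k)| − (1/(n₁n₂)) ‖X - Y‖₁ | ≥ ε ) ≤ 2 |G|² exp( −2 ε² m' / (K² Δ²) ). -/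

import Mathlib

open MeasureTheory ProbabilityTheory

/-- The uniform quantizer `Q_Δ(t) = Δ(⌊t/Δ⌋ + 1/2)`. -/
noncomputable def uniformQuantizer (Δ : ℝ) (t : ℝ) : ℝ :=
  Δ * ((⌊t / Δ⌋ : ℤ) + 1 / 2)

/-- The uniform probability measure on the interval `[-Δ/2, Δ/2]`. -/
noncomputable def uniformDither (Δ : ℝ) : Measure ℝ :=
  (ENNReal.ofReal Δ)⁻¹ • volume.restrict (Set.Icc (-(Δ / 2)) (Δ / 2))

/-- The uniform probability measure on the finite index set `Fin n₁ × Fin n₂`. -/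
noncomputable def uniformIndex (n₁ n₂ : ℕ) : Measure (Fin n₁ × Fin n₂) :=
  ((n₁ * n₂ : ℕ) : ENNReal)⁻¹ • Measure.count

/-- The entrywise ℓ₁-norm of a real matrix. -/
noncomputable def matL1 {n₁ n₂ : ℕ} (X : Matrix (Fin n₁) (Fin n₂) ℝ) : ℝ :=
  ∑ i, ∑ j, |X i j|

/-!
Dithering makes the quantizer unbiased: over a full period of the dither the error
`Q_Δ(t) - t = Δ/2 - Δ * fract (t/Δ)` averages to zero, so `E Q_Δ(x + τ) = x`. As `Q_Δ` is monotone,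
`|Q_Δ(x + τ) - Q_Δ(y + τ)|` is, up to a sign that does not depend on `τ`, the difference of the two
quantized values, and therefore has mean exactly `|x - y|`. It also lies in `[0, |x - y| + Δ]`, so
the sampled averages concentrate by Hoeffding's inequality, and a union bound over the pairs of the
family concludes.
-/

section Probability

variable {Ω κ : Type*} [MeasurableSpace Ω] {P : Measure Ω}

lemma measure_exists_mem_finset_le {α : Type*} {s : Finset α} {p : α → Ω → Prop} {c : ENNReal}
    (h : ∀ a ∈ s, P {ω | p a ω} ≤ c) : P {ω | ∃ a ∈ s, p a ω} ≤ s.card * c := by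
  have hunion : {ω | ∃ a ∈ s, p a ω} = ⋃ a ∈ s, {ω | p a ω} := by ext; simp
  calc P {ω | ∃ a ∈ s, p a ω}
    _ ≤ ∑ a ∈ s, P {ω | p a ω} := hunion ▸ measure_biUnion_finset_le s _
    _ ≤ s.card * c := nsmul_eq_mul s.card c ▸ Finset.sum_le_card_nsmul s _ c h

lemma measureReal_le_abs_le_of_hasSubgaussianMGF {X : Ω → ℝ} {c : NNReal}
    (hX : HasSubgaussianMGF X c P) {ε : ℝ} (hε : 0 ≤ ε) :
    P.real {ω | ε ≤ |X ω|} ≤ 2 * Real.exp (-ε ^ 2 / (2 * c)) := by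
  have hunion : {ω | ε ≤ |X ω|} = {ω | ε ≤ X ω} ∪ {ω | ε ≤ (-X) ω} := by
    ext ω; exact le_abs (a := ε)
  calc P.real {ω | ε ≤ |X ω|}
    _ ≤ P.real {ω | ε ≤ X ω} + P.real {ω | ε ≤ (-X) ω} := hunion ▸ measureReal_union_le _ _
    _ ≤ 2 * Real.exp (-ε ^ 2 / (2 * c)) := by
      linarith [hX.measure_ge_le hε, hX.neg.measure_ge_le hε]

variable [Fintype κ] {X : κ → Ω → ℝ}

theorem measureReal_le_abs_sum_sub_integral_le_of_mem_Icc {a b : κ → ℝ} (hindep : iIndepFun X P)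
    (hmeas : ∀ k, AEMeasurable (X k) P) (hX : ∀ k, ∀ᵐ ω ∂P, X k ω ∈ Set.Icc (a k) (b k))
    {ε : ℝ} (hε : 0 ≤ ε) :
    P.real {ω | ε ≤ |∑ k, (X k ω - ∫ ω', X k ω' ∂P)|}
      ≤ 2 * Real.exp (-(2 * ε ^ 2) / ∑ k, (b k - a k) ^ 2) := by
  have := hindep.isProbabilityMeasure
  have hcentered : iIndepFun (fun k ω ↦ X k ω - ∫ ω', X k ω' ∂P) P :=
    hindep.comp (fun k t ↦ t - ∫ ω', X k ω' ∂P) fun _ ↦ measurable_id.sub_const _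
  have hsum := HasSubgaussianMGF.sum_of_iIndepFun hcentered (s := Finset.univ)
    fun k _ ↦ hasSubgaussianMGF_of_mem_Icc (hmeas k) (hX k)
  convert! measureReal_le_abs_le_of_hasSubgaussianMGF hsum hε using 3
  have hvar : 2 * ((∑ k, (‖b k - a k‖₊ / 2) ^ 2 : NNReal) : ℝ) = (∑ k, (b k - a k) ^ 2) / 2 := by
    push_cast
    simp only [div_pow, Real.norm_eq_abs, sq_abs, ← Finset.sum_div]
    ring
  rw [hvar, div_div_eq_mul_div]
  ring

theorem measureReal_le_abs_average_sub_le_of_mem_Icc {a b c : ℝ} (hindep : iIndepFun X P)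
    (hmeas : ∀ k, AEMeasurable (X k) P) (hX : ∀ k, ∀ᵐ ω ∂P, X k ω ∈ Set.Icc a b)
    (hmean : ∀ k, ∫ ω, X k ω ∂P = c) {ε : ℝ} (hε : 0 ≤ ε) :
    P.real {ω | ε ≤ |(Fintype.card κ : ℝ)⁻¹ * ∑ k, X k ω - c|}
      ≤ 2 * Real.exp (-(2 * ε ^ 2 * Fintype.card κ) / (b - a) ^ 2) := by
  have := hindep.isProbabilityMeasure
  set m := (Fintype.card κ : ℝ)
  have hscale (ω : Ω) : m * (m⁻¹ * ∑ k, X k ω - c) = ∑ k, (X k ω - ∫ ω', X k ω' ∂P) := by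
    rcases isEmpty_or_nonempty κ with _ | _
    · simp [m]
    · simp [hmean, Finset.sum_sub_distrib, mul_sub, m]
  calc P.real {ω | ε ≤ |m⁻¹ * ∑ k, X k ω - c|}
    _ ≤ P.real {ω | m * ε ≤ |∑ k, (X k ω - ∫ ω', X k ω' ∂P)|} := by
      refine measureReal_mono fun ω (hω : ε ≤ _) ↦ ?_
      rw [Set.mem_ofPred_eq, ← hscale, abs_mul, Nat.abs_cast]
      gcongr
    _ ≤ 2 * Real.exp (-(2 * (m * ε) ^ 2) / ∑ _k : κ, (b - a) ^ 2) :=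
      measureReal_le_abs_sum_sub_integral_le_of_mem_Icc hindep hmeas hX (by positivity)
    _ = 2 * Real.exp (-(2 * ε ^ 2 * m) / (b - a) ^ 2) := by
      rw [Finset.sum_const, Finset.card_univ, nsmul_eq_mul]
      congr 2
      rcases eq_or_ne m 0 with hm | hm
      · simp [hm]
      · rw [← mul_div_mul_left _ ((b - a) ^ 2) hm]
        ring

end Probability

section Quantizer

variable {Δ : ℝ}

lemma uniformQuantizer_eq_add_sub_fract (hΔ : Δ ≠ 0) (t : ℝ) :
    uniformQuantizer Δ t = t + Δ / 2 - Δ * Int.fract (t / Δ) := by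
  rw [uniformQuantizer, Int.fract, mul_sub, mul_div_cancel₀ t hΔ]
  ring

lemma uniformQuantizer_mono (hΔ : 0 ≤ Δ) : Monotone (uniformQuantizer Δ) := by
  intro s t hst
  unfold uniformQuantizer
  gcongr

@[fun_prop]
lemma measurable_uniformQuantizer (Δ : ℝ) : Measurable (uniformQuantizer Δ) := by
  unfold uniformQuantizer
  fun_prop

lemma abs_uniformQuantizer_sub_le (hΔ : 0 < Δ) (s t : ℝ) :
    |uniformQuantizer Δ s - uniformQuantizer Δ t| ≤ |s - t| + Δ := by
  have hfract : |Int.fract (t / Δ) - Int.fract (s / Δ)| ≤ 1 :=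
    abs_sub_le_of_nonneg_of_le (Int.fract_nonneg _) (Int.fract_lt_one _).le
      (Int.fract_nonneg _) (Int.fract_lt_one _).le
  calc |uniformQuantizer Δ s - uniformQuantizer Δ t|
    _ = |(s - t) + Δ * (Int.fract (t / Δ) - Int.fract (s / Δ))| := by
      rw [uniformQuantizer_eq_add_sub_fract hΔ.ne', uniformQuantizer_eq_add_sub_fract hΔ.ne']
      ring_nf
    _ ≤ |s - t| + |Δ| * |Int.fract (t / Δ) - Int.fract (s / Δ)| := by
      rw [← abs_mul]; exact abs_add_le _ _
    _ ≤ |s - t| + Δ := by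
      rw [abs_of_pos hΔ]; gcongr; exact mul_le_of_le_one_right hΔ.le hfract

end Quantizer

section Dither

variable {Δ : ℝ}

lemma isProbabilityMeasure_uniformDither (hΔ : 0 < Δ) :
    IsProbabilityMeasure (uniformDither Δ) where
  measure_univ := by
    rw [uniformDither, Measure.smul_apply, Measure.restrict_apply_univ, Real.volume_Icc,
      sub_neg_eq_add, add_halves, smul_eq_mul]
    exact ENNReal.inv_mul_cancel (ENNReal.ofReal_pos.2 hΔ).ne' ENNReal.ofReal_ne_top

variable {E : Type*} [NormedAddCommGroup E]

lemma integrable_uniformDither_of_integrableOn (hΔ : 0 < Δ) {f : ℝ → E}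
    (hf : IntegrableOn f (Set.Icc (-(Δ / 2)) (Δ / 2))) : Integrable f (uniformDither Δ) :=
  hf.smul_measure (ENNReal.inv_ne_top.2 (ENNReal.ofReal_pos.2 hΔ).ne')

lemma integral_uniformDither [NormedSpace ℝ E] (hΔ : 0 ≤ Δ) (f : ℝ → E) :
    ∫ τ, f τ ∂(uniformDither Δ) = Δ⁻¹ • ∫ τ in (-(Δ / 2))..(Δ / 2), f τ := by
  rw [uniformDither, integral_smul_measure, integral_Icc_eq_integral_Ioc,
    ← intervalIntegral.integral_of_le (by linarith), ENNReal.toReal_inv, ENNReal.toReal_ofReal hΔ]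

lemma integrable_id_uniformDither (hΔ : 0 < Δ) : Integrable (fun τ ↦ τ) (uniformDither Δ) :=
  integrable_uniformDither_of_integrableOn hΔ continuous_id.integrableOn_Icc

lemma integral_id_uniformDither (hΔ : 0 ≤ Δ) : ∫ τ, τ ∂(uniformDither Δ) = 0 := by
  simp [integral_uniformDither hΔ]

lemma intervalIntegral_fract_add_one (a : ℝ) : ∫ t in a..(a + 1), Int.fract t = 1 / 2 :=
  calc ∫ t in a..(a + 1), Int.fract t
    _ = ∫ t in (0 : ℝ)..(0 + 1), Int.fract t :=
      (Int.fract_periodic ℝ).intervalIntegral_add_eq a 0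
    _ = ∫ t in (0 : ℝ)..(0 + 1), t := by
      refine intervalIntegral.integral_congr_uIoo fun t ht ↦ ?_
      rw [zero_add, Set.uIoo_of_le zero_le_one] at ht
      exact Int.fract_eq_self.2 ⟨ht.1.le, ht.2⟩
    _ = 1 / 2 := by simp

lemma integral_fract_add_div_uniformDither (hΔ : 0 < Δ) (x : ℝ) :
    ∫ τ, Int.fract ((x + τ) / Δ) ∂(uniformDither Δ) = 1 / 2 := by
  have hperiod : (x + Δ / 2) / Δ = (x + -(Δ / 2)) / Δ + 1 := by field
  rw [integral_uniformDither hΔ.le,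
    intervalIntegral.integral_comp_add_left (fun t ↦ Int.fract (t / Δ)),
    intervalIntegral.integral_comp_div Int.fract hΔ.ne', hperiod, intervalIntegral_fract_add_one,
    inv_smul_smul₀ hΔ.ne']

lemma integrable_uniformQuantizer_add (hΔ : 0 < Δ) (x : ℝ) :
    Integrable (fun τ ↦ uniformQuantizer Δ (x + τ)) (uniformDither Δ) := by
  have hmono : Monotone fun τ ↦ uniformQuantizer Δ (x + τ) :=
    (uniformQuantizer_mono hΔ.le).comp (add_right_mono (a := x))
  exact integrable_uniformDither_of_integrableOn hΔ
    ((hmono.monotoneOn _).integrableOn_isCompact isCompact_Icc)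

theorem integral_uniformQuantizer_add (hΔ : 0 < Δ) (x : ℝ) :
    ∫ τ, uniformQuantizer Δ (x + τ) ∂(uniformDither Δ) = x := by
  have := isProbabilityMeasure_uniformDither hΔ
  have hτ : Integrable (fun τ ↦ τ + (x + Δ / 2)) (uniformDither Δ) :=
    (integrable_id_uniformDither hΔ).add (integrable_const _)
  have hfract : Integrable (fun τ ↦ Int.fract ((x + τ) / Δ)) (uniformDither Δ) :=
    .of_mem_Icc 0 1 (by fun_prop)
      (ae_of_all _ fun τ ↦ ⟨Int.fract_nonneg _, (Int.fract_lt_one _).le⟩)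
  calc ∫ τ, uniformQuantizer Δ (x + τ) ∂(uniformDither Δ)
    _ = ∫ τ, (τ + (x + Δ / 2) - Δ * Int.fract ((x + τ) / Δ)) ∂(uniformDither Δ) := by
      refine integral_congr_ae (ae_of_all _ fun τ ↦ ?_)
      simp only [uniformQuantizer_eq_add_sub_fract hΔ.ne']
      ring
    _ = ∫ τ, τ ∂(uniformDither Δ) + (x + Δ / 2)
          - Δ * ∫ τ, Int.fract ((x + τ) / Δ) ∂(uniformDither Δ) := by
      rw [integral_sub hτ (hfract.const_mul Δ), integral_const_mul,
        integral_add (integrable_id_uniformDither hΔ) (integrable_const _), integral_const,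
        probReal_univ, one_smul]
    _ = x := by
      rw [integral_id_uniformDither hΔ.le, integral_fract_add_div_uniformDither hΔ]
      ring

theorem integral_abs_uniformQuantizer_add_sub (hΔ : 0 < Δ) (x y : ℝ) :
    ∫ τ, |uniformQuantizer Δ (x + τ) - uniformQuantizer Δ (y + τ)| ∂(uniformDither Δ)
      = |x - y| := by
  wlog hyx : y ≤ x generalizing x y
  · simpa only [abs_sub_comm] using this y x (le_of_not_ge hyx)
  have hnonneg (τ : ℝ) : 0 ≤ uniformQuantizer Δ (x + τ) - uniformQuantizer Δ (y + τ) :=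
    sub_nonneg.2 (uniformQuantizer_mono hΔ.le (by gcongr))
  simp only [abs_of_nonneg (hnonneg _), abs_of_nonneg (sub_nonneg.2 hyx)]
  rw [integral_sub (integrable_uniformQuantizer_add hΔ x) (integrable_uniformQuantizer_add hΔ y),
    integral_uniformQuantizer_add hΔ, integral_uniformQuantizer_add hΔ]

end Dither

section Sampling

variable {ι : Type*} {Δ D : ℝ} {x y : ι → ℝ}

/-- The distance `|Q_Δ(x_i + τ) - Q_Δ(y_i + τ)|` between the dithered quantizations of two signals
at a sample `w = (i, τ)`, an index together with a dither. It is the one-sample estimator of the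
mean of `|x - y|`. -/
noncomputable def quantizedDist (Δ : ℝ) (x y : ι → ℝ) (w : ι × ℝ) : ℝ :=
  |uniformQuantizer Δ (x w.1 + w.2) - uniformQuantizer Δ (y w.1 + w.2)|

lemma quantizedDist_nonneg (Δ : ℝ) (x y : ι → ℝ) (w : ι × ℝ) : 0 ≤ quantizedDist Δ x y w :=
  abs_nonneg _

lemma quantizedDist_le (hΔ : 0 < Δ) (x y : ι → ℝ) (w : ι × ℝ) :
    quantizedDist Δ x y w ≤ |x w.1 - y w.1| + Δ := by
  simpa only [quantizedDist, add_sub_add_right_eq_sub] using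
    abs_uniformQuantizer_sub_le hΔ (x w.1 + w.2) (y w.1 + w.2)

variable [MeasurableSpace ι]

lemma measurable_quantizedDist (Δ : ℝ) (hx : Measurable x) (hy : Measurable y) :
    Measurable (quantizedDist Δ x y) := by
  unfold quantizedDist
  fun_prop

theorem integral_quantizedDist {μ : Measure ι} [IsFiniteMeasure μ] (hΔ : 0 < Δ)
    (hx : Measurable x) (hy : Measurable y) (hxy : Integrable (x - y) μ) :
    ∫ w, quantizedDist Δ x y w ∂(μ.prod (uniformDither Δ)) = ∫ i, |x i - y i| ∂μ := by
  have := isProbabilityMeasure_uniformDither hΔ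
  have hint : Integrable (quantizedDist Δ x y) (μ.prod (uniformDither Δ)) := by
    refine ((hxy.abs.comp_fst _).add (integrable_const Δ)).mono'
      (measurable_quantizedDist Δ hx hy).aestronglyMeasurable (ae_of_all _ fun w ↦ ?_)
    rw [Real.norm_of_nonneg (quantizedDist_nonneg Δ x y w)]
    exact quantizedDist_le hΔ x y w
  rw [integral_prod _ hint]
  simp only [quantizedDist, integral_abs_uniformQuantizer_add_sub hΔ]

variable {Ω κ : Type*} [MeasurableSpace Ω] {P : Measure Ω} [Fintype κ] {W : κ → Ω → ι × ℝ}
  {μ : Measure ι} [IsProbabilityMeasure μ] {ε : ℝ}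

theorem measure_le_abs_average_quantizedDist_sub_le (hΔ : 0 < Δ) (hx : Measurable x)
    (hy : Measurable y) (hD : ∀ i, |x i - y i| ≤ D) (hindep : iIndepFun W P)
    (hW : ∀ k, HasLaw (W k) (μ.prod (uniformDither Δ)) P) (hε : 0 ≤ ε) :
    P {ω | ε ≤ |(Fintype.card κ : ℝ)⁻¹ * ∑ k, quantizedDist Δ x y (W k ω)
        - ∫ i, |x i - y i| ∂μ|}
      ≤ ENNReal.ofReal (2 * Real.exp (-(2 * ε ^ 2 * Fintype.card κ) / (D + Δ) ^ 2)) := by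
  have := hindep.isProbabilityMeasure
  have hmeas := measurable_quantizedDist Δ hx hy
  have hmem (w : ι × ℝ) : quantizedDist Δ x y w ∈ Set.Icc 0 (D + Δ) :=
    ⟨quantizedDist_nonneg Δ x y w,
      (quantizedDist_le hΔ x y w).trans (add_le_add_left (hD w.1) Δ)⟩
  have hxy : Integrable (x - y) μ :=
    .of_bound (hx.sub hy).aestronglyMeasurable D (ae_of_all _ hD)
  have hmean (k : κ) : ∫ ω, quantizedDist Δ x y (W k ω) ∂P = ∫ i, |x i - y i| ∂μ :=
    ((hW k).integral_comp hmeas.aestronglyMeasurable).trans (integral_quantizedDist hΔ hx hy hxy)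
  have hoeffding := measureReal_le_abs_average_sub_le_of_mem_Icc
    (hindep.comp (fun _ ↦ quantizedDist Δ x y) fun _ ↦ hmeas)
    (fun k ↦ hmeas.comp_aemeasurable (hW k).aemeasurable)
    (fun k ↦ ae_of_all P fun ω ↦ hmem (W k ω)) hmean hε
  rw [sub_zero] at hoeffding
  rw [← ofReal_measureReal]
  exact ENNReal.ofReal_le_ofReal hoeffding

theorem sampled_quantized_l1_concentration_finite_family_general {α : Type*} {K : ℝ} (hΔ : 0 < Δ)
    (G : Finset α) {x : α → ι → ℝ} (hx : ∀ a ∈ G, Measurable (x a))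
    (hmax : ∀ a ∈ G, ∀ b ∈ G, ∀ i, |x a i - x b i| ≤ (K - 1) * Δ) (hindep : iIndepFun W P)
    (hW : ∀ k, HasLaw (W k) (μ.prod (uniformDither Δ)) P) (hε : 0 ≤ ε) :
    P {ω | ∃ a ∈ G, ∃ b ∈ G, ε ≤ |(Fintype.card κ : ℝ)⁻¹
          * ∑ k, quantizedDist Δ (x a) (x b) (W k ω) - ∫ i, |x a i - x b i| ∂μ|}
      ≤ ENNReal.ofReal (2 * (G.card : ℝ) ^ 2
          * Real.exp (-(2 * ε ^ 2 * Fintype.card κ) / (K ^ 2 * Δ ^ 2))) := by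
  have hrange : (K - 1) * Δ + Δ = K * Δ := by ring
  calc
    _ ≤ G.card * (G.card * ENNReal.ofReal
          (2 * Real.exp (-(2 * ε ^ 2 * Fintype.card κ) / ((K - 1) * Δ + Δ) ^ 2))) :=
      measure_exists_mem_finset_le fun a ha ↦ measure_exists_mem_finset_le fun b hb ↦
        measure_le_abs_average_quantizedDist_sub_le hΔ (hx a ha) (hx b hb) (hmax a ha b hb)
          hindep hW hε
    _ = _ := by
      rw [hrange, mul_pow, ← ENNReal.ofReal_natCast, ← ENNReal.ofReal_mul (by positivity),
        ← ENNReal.ofReal_mul (by positivity)]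
      ring_nf

end Sampling

section UniformIndex

variable {n₁ n₂ : ℕ}

lemma isProbabilityMeasure_uniformIndex (hn₁ : n₁ ≠ 0) (hn₂ : n₂ ≠ 0) :
    IsProbabilityMeasure (uniformIndex n₁ n₂) where
  measure_univ := by
    have hcard : Measure.count (Set.univ : Set (Fin n₁ × Fin n₂)) = ((n₁ * n₂ : ℕ) : ENNReal) := by
      simp [Measure.count_univ]
    rw [uniformIndex, Measure.smul_apply, hcard, smul_eq_mul]
    exact ENNReal.inv_mul_cancel (by simp [hn₁, hn₂]) (ENNReal.natCast_ne_top _)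

lemma integral_abs_sub_uniformIndex (X Y : Matrix (Fin n₁) (Fin n₂) ℝ) :
    ∫ p, |X p.1 p.2 - Y p.1 p.2| ∂(uniformIndex n₁ n₂)
      = ((n₁ : ℝ) * n₂)⁻¹ * matL1 (X - Y) := by
  rw [uniformIndex, integral_smul_measure, integral_count, Fintype.sum_prod_type]
  simp [matL1]

end UniformIndex

/-- Uniform (union-bound) concentration over a finite family `G` of matrices with
pairwise `‖X - Y‖_max ≤ (K-1)Δ`: with i.i.d. uniform indices and i.i.d. uniform dithers
independent of the indices (encoded by the i.i.d. family `W k = ((i_k,j_k), τ_k)` with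
product distribution), for every `ε > 0`,
`P(∃ X,Y ∈ G, |(1/m')Σ_k |Q_Δ(X+τ)-Q_Δ(Y+τ)| - ‖X-Y‖₁/(n₁n₂)| ≥ ε)
  ≤ 2|G|² exp(-2ε²m'/(K²Δ²))`. -/
theorem sampled_quantized_l1_concentration_finite_family {n₁ n₂ m' : ℕ}
    (hn₁ : 0 < n₁) (hn₂ : 0 < n₂)
    (Δ K : ℝ) (hΔ : 0 < Δ) (hK : 1 ≤ K)
    (G : Finset (Matrix (Fin n₁) (Fin n₂) ℝ))
    (hmax : ∀ X ∈ G, ∀ Y ∈ G, ∀ i j, |X i j - Y i j| ≤ (K - 1) * Δ)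
    {Ω : Type*} [MeasurableSpace Ω] (P : Measure Ω) [IsProbabilityMeasure P]
    (W : Fin m' → Ω → (Fin n₁ × Fin n₂) × ℝ)
    (hmeas : ∀ k, Measurable (W k))
    (hindep : iIndepFun W P)
    (hdist : ∀ k, Measure.map (W k) P = (uniformIndex n₁ n₂).prod (uniformDither Δ))
    (ε : ℝ) (hε : 0 < ε) :
    P {ω | ∃ X ∈ G, ∃ Y ∈ G, ε ≤ |(m' : ℝ)⁻¹ * (∑ k : Fin m',
          |uniformQuantizer Δ (X (W k ω).1.1 (W k ω).1.2 + (W k ω).2)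
            - uniformQuantizer Δ (Y (W k ω).1.1 (W k ω).1.2 + (W k ω).2)|)
        - ((n₁ : ℝ) * n₂)⁻¹ * matL1 (X - Y)|}
      ≤ ENNReal.ofReal (2 * (G.card : ℝ) ^ 2
          * Real.exp (-(2 * ε ^ 2 * m') / (K ^ 2 * Δ ^ 2))) := by
  have := isProbabilityMeasure_uniformIndex hn₁.ne' hn₂.ne'
  simpa only [integral_abs_sub_uniformIndex, quantizedDist, Fintype.card_fin] using
    sampled_quantized_l1_concentration_finite_family_general hΔ G
      (x := fun X p ↦ X p.1 p.2) (fun _ _ ↦ measurable_of_finite _)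
      (fun X hX Y hY p ↦ hmax X hX Y hY p.1 p.2) hindep
      (fun k ↦ ⟨(hmeas k).aemeasurable, hdist k⟩) hε.le
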